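/- Suppose ‖T_i‖ < 1/2 for all 1 ≤ i ≤ m and t(T_1,…,T_m) > d. Then for Lebesgue-almost every a = (a_1,…,a_m) ∈ ℝ^{md}, the self-affine set K^a has non-empty interior. -/

import Mathlib

open MeasureTheory

noncomputable section

namespace SelfAffine

variable {d m : ℕ}

/-- Euclidean operator norm of a `d × d` real matrix. -/
def opNorm (A : Matrix (Fin d) (Fin d) ℝ) : ℝ :=
  ‖Matrix.toEuclideanCLM (𝕜 := ℝ) A‖

/-- smallest singular value of an invertible matrix, via `α_d(A) = ‖A⁻¹‖⁻¹`. -/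
def alphaMin (A : Matrix (Fin d) (Fin d) ℝ) : ℝ := (opNorm A⁻¹)⁻¹

/-- `T_I = T_{i_1} ⋯ T_{i_n}` for a finite word `I ∈ Σ_n`. -/
def wordProd (T : Fin m → Matrix (Fin d) (Fin d) ℝ) {n : ℕ} (I : Fin n → Fin m) :
    Matrix (Fin d) (Fin d) ℝ :=
  (List.ofFn fun k => T (I k)).prod

/-- the coding map `π^a : Σ → ℝ^d`, `π^a(x) = ∑_{n ≥ 0} T_{x|n} a_{x_{n+1}}`. -/
def codingMap (T : Fin m → Matrix (Fin d) (Fin d) ℝ)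
    (a : Fin m → EuclideanSpace ℝ (Fin d)) (x : ℕ → Fin m) : EuclideanSpace ℝ (Fin d) :=
  ∑' n : ℕ, Matrix.toEuclideanCLM (𝕜 := ℝ) (wordProd T fun k : Fin n => x (k : ℕ)) (a (x n))

/-- the self-affine set `K^a = π^a(Σ)`. -/
def attractor (T : Fin m → Matrix (Fin d) (Fin d) ℝ)
    (a : Fin m → EuclideanSpace ℝ (Fin d)) : Set (EuclideanSpace ℝ (Fin d)) :=
  Set.range (codingMap T a)

/-- the quantity `t(T_1, …, T_m)`. -/
def tParam (T : Fin m → Matrix (Fin d) (Fin d) ℝ) : ℝ :=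
  sInf { t : ℝ | 0 ≤ t ∧ ∀ n : ℕ, 0 < n →
    ∑ I : Fin n → Fin m, alphaMin (wordProd T I) ^ t * |(wordProd T I).det| ≤ 1 }

/-!
If a finite measure `ν` has an integrable Fourier transform, then it has a continuous density, and
every closed set carrying `ν` has interior points. We look for such a `ν` on the attractor `K^a`,
namely the image `ν_a` under the coding map of a Bernoulli measure `μ` on sequences.

Let the translations `a` be Gaussian. Averaging `|ν̂_a(ξ)|²` over `a` gives the integral over pairs
of sequences of the characteristic function of the Gaussian vector `π^a(x) - π^a(y)`. If `x` and `y`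
first differ after the common word `I`, this vector is `T_I` applied to a Gaussian vector, which is
nondegenerate because `‖T_i‖ < 1/2` (transversality). The average is therefore bounded by
`∑_I μ[I]² exp (-c ‖T_I^* ξ‖²)`, and the substitution `η = T_I^* ξ` yields
`E ∫ ‖ξ‖^s |ν̂_a(ξ)|² dξ ≲ ∑_I μ[I]² α_d(T_I)^(-s) |det T_I|⁻¹`.

For `d < s < t` some `n` has `∑_{|I| = n} α_d(T_I)^s |det T_I| > 1`. Giving the words of length `n`
probabilities proportional to these summands turns the series over blocks into a convergent
geometric series. Since `s > d`, finiteness of `∫ ‖ξ‖^s |ν̂_a(ξ)|² dξ` makes `ν̂_a` integrable.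
-/

section Fourier

open Real FourierTransform SchwartzMap ContDiff

variable {E : Type*} [NormedAddCommGroup E] [InnerProductSpace ℝ E] [MeasurableSpace E]

/-- The inverse Fourier transform `ξ ↦ ∫ exp (2πi⟪x, ξ⟫) dν(x)` of a measure, with the
normalization of Mathlib's `𝓕⁻` for functions. -/
def measureFourierInv (ν : Measure E) (ξ : E) : ℂ := charFun ν ((2 * π) • ξ)

lemma measureFourierInv_eq_fourierIntegral (ν : Measure E) :
    measureFourierInv ν = VectorFourier.fourierIntegral 𝐞 ν (-innerₗ E) (fun _ ↦ (1 : ℂ)) := by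
  ext ξ
  simp [measureFourierInv, charFun_apply, VectorFourier.fourierIntegral, Circle.smul_def,
    fourierChar_apply, inner_smul_right]

variable [BorelSpace E] [FiniteDimensional ℝ E]

lemma continuous_fourier_of_integrable {g : E → ℂ} (hg : Integrable g) : Continuous (𝓕 g) :=
  VectorFourier.fourierIntegral_continuous continuous_fourierChar continuous_inner hg

variable {ν : Measure E} [IsFiniteMeasure ν]

lemma continuous_measureFourierInv : Continuous (measureFourierInv ν) :=
  continuous_charFun.comp (continuous_const_smul _)

lemma integral_schwartz_eq_integral_mul_fourier (hν : Integrable (measureFourierInv ν))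
    (f : 𝓢(E, ℂ)) : ∫ x, f x ∂ν = ∫ x, f x * 𝓕 (measureFourierInv ν) x := by
  have hL : Continuous fun p : E × E ↦ innerₗ E p.1 p.2 := continuous_inner
  have hL' : Continuous fun p : E × E ↦ (-innerₗ E) p.1 p.2 := continuous_inner.neg
  have hflip : (-innerₗ E).flip = -innerₗ E := by ext; simp [real_inner_comm]
  have hf (x : E) : 𝓕⁻ ((𝓕 f : 𝓢(E, ℂ)) : E → ℂ) x = f x := by
    rw [← fourierInv_coe, FourierTransform.fourierInv_fourier_eq]
  calc ∫ x, f x ∂ν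
      = ∫ x, (1 : ℂ) • VectorFourier.fourierIntegral 𝐞 volume (-innerₗ E).flip
          (𝓕 f : 𝓢(E, ℂ)) x ∂ν := by
        simp only [one_smul, hflip, ← hf]
        rfl
    _ = ∫ ξ, measureFourierInv ν ξ • (𝓕 f) ξ := by
        rw [measureFourierInv_eq_fourierIntegral]
        exact (VectorFourier.integral_fourierIntegral_smul_eq_flip continuous_fourierChar hL'
          (integrable_const _) (𝓕 f).integrable).symm
    _ = ∫ ξ, VectorFourier.fourierIntegral 𝐞 volume (innerₗ E) f ξ • measureFourierInv ν ξ := by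
        simp only [smul_eq_mul, mul_comm (measureFourierInv ν _), fourier_coe]
        rfl
    _ = ∫ x, f x * 𝓕 (measureFourierInv ν) x := by
        rw [VectorFourier.integral_fourierIntegral_smul_eq_flip continuous_fourierChar hL
          f.integrable hν, flip_innerₗ]
        rfl

lemma integral_smooth_eq_integral_smul_fourier (hν : Integrable (measureFourierInv ν))
    {f : E → ℝ} (hf : ContDiff ℝ ∞ f) (hf' : HasCompactSupport f) :
    ((∫ x, f x ∂ν : ℝ) : ℂ) = ∫ x, f x • 𝓕 (measureFourierInv ν) x := by
  have hg : HasCompactSupport (Complex.ofRealCLM ∘ f) := hf'.comp_left rfl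
  have hg' : ContDiff ℝ ∞ (Complex.ofRealCLM ∘ f) := by fun_prop
  rw [← integral_complex_ofReal]
  simpa using integral_schwartz_eq_integral_mul_fourier hν (hg.toSchwartzMap hg')

lemma eqOn_fourier_measureFourierInv_zero (hν : Integrable (measureFourierInv ν))
    {U : Set E} (hU : IsOpen U) (hνU : ∀ᵐ x ∂ν, x ∉ U) :
    Set.EqOn (𝓕 (measureFourierInv ν)) 0 U := by
  have hcont := continuous_fourier_of_integrable hν
  have hae := hU.ae_eq_zero_of_integral_contDiff_smul_eq_zero
    (hcont.locallyIntegrable.locallyIntegrableOn U) fun f hf hf' hfU ↦ by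
      rw [← integral_smooth_eq_integral_smul_fourier hν hf hf', integral_eq_zero_of_ae,
        Complex.ofReal_zero]
      filter_upwards [hνU] with x hx
      exact image_eq_zero_of_notMem_tsupport fun h ↦ hx (hfU h)
  exact Measure.eqOn_open_of_ae_eq ((ae_restrict_iff' hU.measurableSet).2 hae) hU
    hcont.continuousOn continuousOn_const

theorem nonempty_interior_of_integrable_charFun [NeZero ν] (hν : Integrable (charFun ν))
    {K : Set E} (hK : IsClosed K) (hνK : ∀ᵐ x ∂ν, x ∈ K) : (interior K).Nonempty := by
  have hΨ : Integrable (measureFourierInv ν) := hν.comp_smul (by positivity)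
  by_contra hne
  rw [Set.not_nonempty_iff_eq_empty, interior_eq_empty_iff_dense_compl] at hne
  have hzero : 𝓕 (measureFourierInv ν) = 0 :=
    (continuous_fourier_of_integrable hΨ).ext_on hne continuous_const
      (eqOn_fourier_measureFourierInv_zero hΨ hK.isOpen_compl (by simpa using hνK))
  have hΨ0 : measureFourierInv ν = 0 := by
    rw [← continuous_measureFourierInv.fourierInv_fourier_eq hΨ
      (hzero ▸ integrable_zero _ _ _), hzero]
    ext
    simp [fourierInv_eq]
  refine measureReal_univ_ne_zero (μ := ν) ?_
  simpa [measureFourierInv] using congrFun hΨ0 0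

end Fourier

section RandomMeasure

open scoped ENNReal

variable {E : Type*} [NormedAddCommGroup E] [InnerProductSpace ℝ E] [MeasurableSpace E]
  [BorelSpace E]

lemma le_rpow_mul_sq_add_two_rpow_mul {s t r : ℝ} (hs : 0 ≤ s) (ht : t ≤ 1) (hr : 0 ≤ r) :
    t ≤ r ^ s * t ^ 2 + 2 ^ s * (1 + r) ^ (-s) := by
  have hdecay : (2 / (1 + r)) ^ s = 2 ^ s * (1 + r) ^ (-s) := by
    rw [Real.div_rpow zero_le_two (by positivity), Real.rpow_neg (by positivity), div_eq_mul_inv]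
  rw [← hdecay]
  rcases le_total r 1 with hr1 | hr1
  · calc t ≤ 1 := ht
      _ ≤ (2 / (1 + r)) ^ s := Real.one_le_rpow ((one_le_div (by positivity)).2 (by linarith)) hs
      _ ≤ _ := le_add_of_nonneg_left (by positivity)
  · have : 0 < r ^ s := by positivity
    calc t ≤ r ^ s * t ^ 2 + (r ^ s)⁻¹ := by
          have : r ^ s * t ^ 2 + (r ^ s)⁻¹ - t
              = (r ^ s)⁻¹ * ((r ^ s * t - 1 / 2) ^ 2 + 3 / 4) := by
            field_simp
            ring
          have : 0 ≤ (r ^ s)⁻¹ * ((r ^ s * t - 1 / 2) ^ 2 + 3 / 4) := by positivity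
          linarith
      _ ≤ r ^ s * t ^ 2 + (2 / (1 + r)) ^ s := by
          rw [← Real.inv_rpow hr]
          have : r⁻¹ ≤ 2 / (1 + r) := by
            rw [inv_eq_one_div, div_le_div_iff₀ (by positivity) (by positivity)]
            linarith
          gcongr

lemma integrable_of_lintegral_rpow_mul_sq_lt_top [FiniteDimensional ℝ E] {ψ : E → ℂ}
    (hψ : Measurable ψ) (hψ1 : ∀ ξ, ‖ψ ξ‖ ≤ 1) {s : ℝ} (hs : Module.finrank ℝ E < s)
    (h : ∫⁻ ξ, ‖ξ‖ₑ ^ s * ‖ψ ξ‖ₑ ^ 2 < ∞) : Integrable ψ := by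
  have hs0 : 0 ≤ s := (Nat.cast_nonneg _).trans hs.le
  have hdecay : Integrable fun ξ : E ↦ 2 ^ s * (1 + ‖ξ‖) ^ (-s) :=
    (integrable_one_add_norm hs).const_mul _
  have hweight : Integrable fun ξ ↦ ‖ξ‖ ^ s * ‖ψ ξ‖ ^ 2 := by
    refine ⟨by fun_prop, ?_⟩
    simpa [HasFiniteIntegral, enorm_mul, Real.enorm_rpow_of_nonneg (norm_nonneg _) hs0] using h
  exact (hweight.add hdecay).mono' (by fun_prop) (.of_forall fun ξ ↦
    le_rpow_mul_sq_add_two_rpow_mul hs0 (hψ1 ξ) (norm_nonneg ξ))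

lemma charFun_map_apply [SecondCountableTopology E] {X : Type*} [MeasurableSpace X]
    {μ : Measure X} {f : X → E} (hf : Measurable f) (ξ : E) :
    charFun (μ.map f) ξ = ∫ x, Complex.exp (inner ℝ (f x) ξ * Complex.I) ∂μ := by
  rw [charFun_apply, integral_map hf.aemeasurable (by fun_prop)]

lemma integral_cexp_inner_sub_prod [SecondCountableTopology E] {X : Type*} [MeasurableSpace X]
    {μ : Measure X} [SFinite μ] {f : X → E} (hf : Measurable f) (ξ : E) :
    ∫ q, Complex.exp (inner ℝ (f q.1 - f q.2) ξ * Complex.I) ∂μ.prod μ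
      = (‖charFun (μ.map f) ξ‖ ^ 2 : ℝ) := by
  have hsplit (q : X × X) : Complex.exp (inner ℝ (f q.1 - f q.2) ξ * Complex.I)
      = Complex.exp (inner ℝ (f q.1) ξ * Complex.I)
        * Complex.exp (inner ℝ (f q.2) (-ξ) * Complex.I) := by
    rw [← Complex.exp_add, inner_sub_left, inner_neg_right]
    push_cast
    ring_nf
  simp only [hsplit]
  rw [integral_prod_mul (fun x ↦ Complex.exp (inner ℝ (f x) ξ * Complex.I))
    (fun x ↦ Complex.exp (inner ℝ (f x) (-ξ) * Complex.I)), ← charFun_map_apply hf,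
    ← charFun_map_apply hf, charFun_neg, Complex.mul_conj, Complex.normSq_eq_norm_sq]

variable {Ω X : Type*} [MeasurableSpace Ω] [MeasurableSpace X]
  {γ : Measure Ω} {μ : Measure X} {Z : Ω → X → E}

lemma lintegral_enorm_charFun_map_sq_le [SecondCountableTopology E] [IsFiniteMeasure γ]
    [IsFiniteMeasure μ] (hZ : Measurable (Function.uncurry Z)) (ξ : E) :
    ∫⁻ ω, ‖charFun (μ.map (Z ω)) ξ‖ₑ ^ 2 ∂γ
      ≤ ∫⁻ q, ‖charFun (γ.map fun ω ↦ Z ω q.1 - Z ω q.2) ξ‖ₑ ∂μ.prod μ := by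
  have hdiff : Measurable fun p : Ω × (X × X) ↦ Z p.1 p.2.1 - Z p.1 p.2.2 :=
    (hZ.comp (by fun_prop : Measurable fun p : Ω × (X × X) ↦ (p.1, p.2.1))).sub
      (hZ.comp (by fun_prop : Measurable fun p : Ω × (X × X) ↦ (p.1, p.2.2)))
  set e : Ω → X × X → ℂ := fun ω q ↦ Complex.exp (inner ℝ (Z ω q.1 - Z ω q.2) ξ * Complex.I)
  have he : Integrable (Function.uncurry e) (γ.prod (μ.prod μ)) := by
    refine .of_bound (by fun_prop) 1 (.of_forall fun p ↦ ?_)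
    exact (Complex.norm_exp_ofReal_mul_I _).le
  have hsq (ω : Ω) : ∫ q, e ω q ∂μ.prod μ = (‖charFun (μ.map (Z ω)) ξ‖ ^ 2 : ℝ) :=
    integral_cexp_inner_sub_prod (hZ.comp measurable_prodMk_left) ξ
  have hint : Integrable (fun ω ↦ ‖charFun (μ.map (Z ω)) ξ‖ ^ 2) γ := by
    simpa only [Function.uncurry, hsq, Complex.norm_real, norm_pow, norm_norm]
      using he.integral_prod_left.norm
  calc ∫⁻ ω, ‖charFun (μ.map (Z ω)) ξ‖ₑ ^ 2 ∂γ
      = ENNReal.ofReal (∫ ω, ‖charFun (μ.map (Z ω)) ξ‖ ^ 2 ∂γ) := by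
        rw [ofReal_integral_eq_lintegral_ofReal hint (.of_forall fun ω ↦ by positivity)]
        simp only [ENNReal.ofReal_pow (norm_nonneg _), ofReal_norm]
    _ = ‖∫ ω, ∫ q, e ω q ∂μ.prod μ ∂γ‖ₑ := by
        simp only [hsq]
        rw [integral_complex_ofReal, ← ofReal_norm, Complex.norm_real,
          Real.norm_of_nonneg (integral_nonneg fun ω ↦ by positivity)]
    _ = ‖∫ q, charFun (γ.map fun ω ↦ Z ω q.1 - Z ω q.2) ξ ∂μ.prod μ‖ₑ := by
        rw [integral_integral_swap he]
        congr with q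
        exact (charFun_map_apply (hdiff.comp measurable_prodMk_right) ξ).symm
    _ ≤ ∫⁻ q, ‖charFun (γ.map fun ω ↦ Z ω q.1 - Z ω q.2) ξ‖ₑ ∂μ.prod μ :=
        enorm_integral_le_lintegral_enorm _

lemma measurable_uncurry_charFun_map [SecondCountableTopology E] [SFinite μ]
    (hZ : Measurable (Function.uncurry Z)) :
    Measurable fun p : Ω × E ↦ charFun (μ.map (Z p.1)) p.2 := by
  have : Measurable fun r : (Ω × E) × X ↦ Z r.1.1 r.2 :=
    hZ.comp (by fun_prop : Measurable fun r : (Ω × E) × X ↦ (r.1.1, r.2))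
  have hexp : Measurable fun r : (Ω × E) × X ↦
      Complex.exp (inner ℝ (Z r.1.1 r.2) r.1.2 * Complex.I) := by fun_prop
  convert (hexp.stronglyMeasurable.integral_prod_right' (ν := μ)).measurable using 2 with p
  exact charFun_map_apply (hZ.comp measurable_prodMk_left) p.2

theorem ae_integrable_charFun_map [FiniteDimensional ℝ E] [IsFiniteMeasure γ]
    [IsProbabilityMeasure μ] (hZ : Measurable (Function.uncurry Z)) {s : ℝ}
    (hs : Module.finrank ℝ E < s) (h : ∫⁻ ξ : E, ‖ξ‖ₑ ^ s
      * ∫⁻ q, ‖charFun (γ.map fun ω ↦ Z ω q.1 - Z ω q.2) ξ‖ₑ ∂μ.prod μ < ∞) :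
    ∀ᵐ ω ∂γ, Integrable (charFun (μ.map (Z ω))) := by
  have hψ := measurable_uncurry_charFun_map (μ := μ) hZ
  have hmeas : Measurable fun p : Ω × E ↦ ‖p.2‖ₑ ^ s * ‖charFun (μ.map (Z p.1)) p.2‖ₑ ^ 2 := by
    fun_prop
  have hfin : ∫⁻ ω, ∫⁻ ξ, ‖ξ‖ₑ ^ s * ‖charFun (μ.map (Z ω)) ξ‖ₑ ^ 2 ∂volume ∂γ < ∞ := by
    rw [lintegral_lintegral_swap hmeas.aemeasurable]
    refine lt_of_le_of_lt (lintegral_mono fun ξ ↦ ?_) h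
    have hψξ : Measurable fun ω ↦ charFun (μ.map (Z ω)) ξ := hψ.comp measurable_prodMk_right
    rw [lintegral_const_mul _ (hψξ.enorm.pow_const 2)]
    gcongr
    exact lintegral_enorm_charFun_map_sq_le hZ ξ
  filter_upwards [ae_lt_top (by fun_prop) hfin.ne] with ω hω
  have : IsProbabilityMeasure (μ.map (Z ω)) :=
    Measure.isProbabilityMeasure_map (hZ.comp measurable_prodMk_left).aemeasurable
  exact integrable_of_lintegral_rpow_mul_sq_lt_top (by fun_prop) norm_charFun_le_one hs hω

end RandomMeasure

section Gaussian

open scoped Real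

variable (F : Type*) [NormedAddCommGroup F] [InnerProductSpace ℝ F] [MeasurableSpace F]
  [BorelSpace F] [FiniteDimensional ℝ F]

/-- The centred Gaussian probability measure on `F` with density `v ↦ exp (-π ‖v‖ ^ 2)`. -/
def gaussianMeasure : Measure F :=
  volume.withDensity fun v ↦ ENNReal.ofReal (Real.exp (-π * ‖v‖ ^ 2))

lemma integrable_exp_neg_mul_sq_norm {c : ℝ} (hc : 0 < c) :
    Integrable fun v : F ↦ Real.exp (-c * ‖v‖ ^ 2) := by
  have := GaussianFourier.integrable_cexp_neg_mul_sq_norm_add (V := F) (b := c) hc 0 0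
  simpa [Complex.norm_exp, ← Complex.ofReal_pow] using this.norm

instance : IsProbabilityMeasure (gaussianMeasure F) where
  measure_univ := by
    rw [gaussianMeasure, withDensity_apply _ .univ, Measure.restrict_univ,
      ← ofReal_integral_eq_lintegral_ofReal (integrable_exp_neg_mul_sq_norm F Real.pi_pos)
        (.of_forall fun v ↦ (Real.exp_pos _).le),
      GaussianFourier.integral_rexp_neg_mul_sq_norm Real.pi_pos]
    simp

lemma absolutelyContinuous_gaussianMeasure : volume ≪ gaussianMeasure F :=
  withDensity_absolutelyContinuous' (by fun_prop) (.of_forall fun v ↦ by simp [Real.exp_pos])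

variable {F}

lemma charFun_gaussianMeasure (t : F) :
    charFun (gaussianMeasure F) t = Real.exp (-(4 * π)⁻¹ * ‖t‖ ^ 2) := by
  rw [charFun_apply, gaussianMeasure, integral_withDensity_eq_integral_toReal_smul (by fun_prop)
    (.of_forall fun v ↦ ENNReal.ofReal_lt_top)]
  have hdensity (v : F) : (ENNReal.ofReal (Real.exp (-π * ‖v‖ ^ 2))).toReal
      • Complex.exp (inner ℝ v t * Complex.I)
      = Complex.exp (-(π : ℂ) * ‖v‖ ^ 2 + Complex.I * inner ℝ t v) := by
    rw [ENNReal.toReal_ofReal (Real.exp_pos _).le, Complex.real_smul, Complex.ofReal_exp,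
      ← Complex.exp_add, real_inner_comm]
    push_cast
    ring_nf
  simp only [hdensity]
  rw [GaussianFourier.integral_cexp_neg_mul_sq_norm_add (by simpa using Real.pi_pos),
    div_self (by simp), Complex.one_cpow, one_mul, Complex.I_sq]
  push_cast
  ring_nf

lemma charFun_map_gaussianMeasure {E : Type*} [NormedAddCommGroup E] [InnerProductSpace ℝ E]
    [MeasurableSpace E] [BorelSpace E] [SecondCountableTopology E] [CompleteSpace E]
    (L : F →L[ℝ] E) (ξ : E) :
    charFun ((gaussianMeasure F).map L) ξ
      = Real.exp (-(4 * π)⁻¹ * ‖ContinuousLinearMap.adjoint L ξ‖ ^ 2) := by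
  rw [← charFun_gaussianMeasure, charFun_map_apply L.measurable, charFun_apply]
  simp only [ContinuousLinearMap.adjoint_inner_right]

lemma ae_of_ae_gaussianMeasure {V : Type*} [NormedAddCommGroup V] [NormedSpace ℝ V]
    [MeasurableSpace V] [BorelSpace V] {μ : Measure V} [μ.IsAddHaarMeasure] (e : F ≃L[ℝ] V)
    {p : V → Prop} (h : ∀ᵐ v ∂gaussianMeasure F, p (e v)) : ∀ᵐ x ∂μ, p x := by
  have : FiniteDimensional ℝ V := e.toLinearEquiv.finiteDimensional
  have : ProperSpace V := FiniteDimensional.proper_real V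
  have := e.isAddHaarMeasure_map (volume : Measure F)
  refine (Measure.absolutelyContinuous_isAddHaarMeasure μ ((volume : Measure F).map e)).ae_le ?_
  exact (e.toHomeomorph.measurableEmbedding.ae_map_iff (p := p)).2
    ((absolutelyContinuous_gaussianMeasure F).ae_le h)

end Gaussian

section Words

variable {ι M : Type*} [Monoid M]

/-- The word formed by the first `n` letters of the sequence `x`. -/
def initWord (x : ℕ → ι) (n : ℕ) : Fin n → ι := fun k ↦ x k

/-- The product `T_I = T_{i_1} ⋯ T_{i_n}` along a finite word `I`, in an arbitrary monoid. -/
def prodWord (T : ι → M) {n : ℕ} (I : Fin n → ι) : M := (List.ofFn fun k ↦ T (I k)).prod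

lemma initWord_eq_initWord_iff {x y : ℕ → ι} {n : ℕ} :
    initWord x n = initWord y n ↔ ∀ k < n, x k = y k := by
  simp [initWord, funext_iff, Fin.forall_iff]

@[simp]
lemma prodWord_zero (T : ι → M) (I : Fin 0 → ι) : prodWord T I = 1 := by simp [prodWord]

lemma prodWord_succ (T : ι → M) {n : ℕ} (I : Fin (n + 1) → ι) :
    prodWord T I = T (I 0) * prodWord T (Fin.tail I) := by
  simp [prodWord, List.ofFn_succ, Fin.tail]

lemma prodWord_initWord_succ (T : ι → M) (x : ℕ → ι) (n : ℕ) :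
    prodWord T (initWord x (n + 1)) = T (x 0) * prodWord T (initWord (fun j ↦ x (j + 1)) n) :=
  prodWord_succ T _

lemma prodWord_initWord_add (T : ι → M) (x : ℕ → ι) (k l : ℕ) :
    prodWord T (initWord x (k + l))
      = prodWord T (initWord x k) * prodWord T (initWord (fun j ↦ x (j + k)) l) := by
  induction k generalizing x with
  | zero => rw [Nat.zero_add, prodWord_zero, one_mul]; rfl
  | succ k ih =>
    rw [Nat.succ_add, prodWord_initWord_succ, prodWord_initWord_succ, ih, mul_assoc]
    simp only [add_assoc]

lemma prodWord_initWord_succ_last (T : ι → M) (x : ℕ → ι) (n : ℕ) :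
    prodWord T (initWord x (n + 1)) = prodWord T (initWord x n) * T (x n) := by
  rw [prodWord_initWord_add]
  simp [prodWord, initWord]

lemma map_prodWord {N F : Type*} [Monoid N] [FunLike F M N] [MonoidHomClass F M N] (f : F)
    (T : ι → M) {n : ℕ} (I : Fin n → ι) :
    f (prodWord T I) = prodWord (fun i ↦ f (T i)) I := by
  simp [prodWord, map_list_prod, List.map_ofFn, Function.comp_def]

lemma apply_prodWord_le_prod {R : Type*} [CommMonoid R] [Preorder R] [MulLeftMono R] {f : M → R}
    (h_one : f 1 ≤ 1) (h_mul : ∀ a b, f (a * b) ≤ f a * f b) (T : ι → M)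
    {n : ℕ} (I : Fin n → ι) : f (prodWord T I) ≤ ∏ k, f (T (I k)) := by
  induction n with
  | zero => simpa
  | succ n ih =>
    rw [prodWord_succ, Fin.prod_univ_succ]
    exact (h_mul _ _).trans (mul_le_mul_right (ih _) _)

end Words

section Coding

variable {ι E : Type*} [Fintype ι] [NormedAddCommGroup E] [NormedSpace ℝ E] {A : ι → E →L[ℝ] E}

lemma norm_prodWord_le (A : ι → E →L[ℝ] E) {n : ℕ} (I : Fin n → ι) :
    ‖prodWord A I‖ ≤ ‖A‖ ^ n := by
  have h := apply_prodWord_le_prod (f := fun B : E →L[ℝ] E ↦ ‖B‖₊)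
    ContinuousLinearMap.norm_id_le nnnorm_mul_le A I
  calc ‖prodWord A I‖ ≤ ((∏ k, ‖A (I k)‖₊ : NNReal) : ℝ) := h
    _ = ∏ k, ‖A (I k)‖ := by simp
    _ ≤ ∏ _k : Fin n, ‖A‖ :=
      Finset.prod_le_prod (fun _ _ ↦ norm_nonneg _) fun k _ ↦ norm_le_pi_norm A (I k)
    _ = ‖A‖ ^ n := by simp

/-- The coding map `π^a(x) = ∑_n A_{x_0} ⋯ A_{x_{n-1}} a_{x_n}`, as a continuous linear function of
the translation vector `a`. -/
def coding (A : ι → E →L[ℝ] E) (x : ℕ → ι) : (ι → E) →L[ℝ] E :=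
  ∑' n, prodWord A (initWord x n) ∘L ContinuousLinearMap.proj (x n)

lemma norm_prodWord_comp_proj_le (A : ι → E →L[ℝ] E) (x : ℕ → ι) (n : ℕ) :
    ‖prodWord A (initWord x n) ∘L ContinuousLinearMap.proj (R := ℝ) (φ := fun _ : ι ↦ E) (x n)‖
      ≤ ‖A‖ ^ n := by
  refine ContinuousLinearMap.opNorm_le_bound _ (by positivity) fun a ↦ ?_
  exact (prodWord A (initWord x n)).le_of_opNorm_le_of_le (norm_prodWord_le A _)
    (norm_le_pi_norm a (x n))

lemma norm_coding_le (hA : ‖A‖ < 1) (x : ℕ → ι) : ‖coding A x‖ ≤ (1 - ‖A‖)⁻¹ :=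
  tsum_of_norm_bounded (hasSum_geometric_of_lt_one (norm_nonneg A) hA)
    (norm_prodWord_comp_proj_le A x)

variable [CompleteSpace E]

lemma hasSum_coding (hA : ‖A‖ < 1) (x : ℕ → ι) :
    HasSum (fun n ↦ prodWord A (initWord x n) ∘L ContinuousLinearMap.proj (x n)) (coding A x) :=
  (Summable.of_norm_bounded (summable_geometric_of_lt_one (norm_nonneg A) hA)
    (norm_prodWord_comp_proj_le A x)).hasSum

lemma coding_apply (hA : ‖A‖ < 1) (x : ℕ → ι) (a : ι → E) :
    coding A x a = ∑' n, prodWord A (initWord x n) (a (x n)) :=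
  ((hasSum_coding hA x).mapL (ContinuousLinearMap.apply ℝ E a)).tsum_eq.symm

lemma coding_apply_eq_add (hA : ‖A‖ < 1) (x : ℕ → ι) (a : ι → E) :
    coding A x a = a (x 0) + A (x 0) (coding A (fun j ↦ x (j + 1)) a) := by
  have h (y : ℕ → ι) : HasSum (fun n ↦ prodWord A (initWord y n) (a (y n))) (coding A y a) :=
    (hasSum_coding hA y).mapL (ContinuousLinearMap.apply ℝ E a)
  refine (h x).unique ((hasSum_nat_add_iff' 1).1 ?_)
  simpa [prodWord_initWord_succ] using (h fun j ↦ x (j + 1)).mapL (A (x 0))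

lemma coding_sub_coding (hA : ‖A‖ < 1) {x y : ℕ → ι} {l : ℕ} (h : ∀ k < l, x k = y k)
    (a : ι → E) :
    coding A x a - coding A y a = prodWord A (initWord x l)
      (coding A (fun j ↦ x (j + l)) a - coding A (fun j ↦ y (j + l)) a) := by
  induction l generalizing x y with
  | zero => simp
  | succ l ih =>
    have hxy := ih (x := fun j ↦ x (j + 1)) (y := fun j ↦ y (j + 1)) fun k hk ↦ h _ (by lia)
    rw [coding_apply_eq_add hA x, coding_apply_eq_add hA y, ← h 0 l.succ_pos,
      add_sub_add_left_eq_sub, ← map_sub, hxy, prodWord_initWord_succ]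
    simp only [add_assoc]
    rfl

lemma norm_coding_sub_le (hA : ‖A‖ < 1) (x : ℕ → ι) (a : ι → E) :
    ‖coding A x a - a (x 0)‖ ≤ ‖A‖ / (1 - ‖A‖) * ‖a‖ := by
  rw [coding_apply_eq_add hA, add_sub_cancel_left, div_eq_mul_inv, mul_assoc]
  exact (A (x 0)).le_of_opNorm_le_of_le (norm_le_pi_norm A _)
    (ContinuousLinearMap.le_of_opNorm_le _ (norm_coding_le hA _) a)

variable [TopologicalSpace ι] [DiscreteTopology ι]

lemma continuous_coding (hA : ‖A‖ < 1) : Continuous (coding A) := by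
  refine continuous_tsum (fun n ↦ ?_) (summable_geometric_of_lt_one (norm_nonneg A) hA)
    fun n x ↦ norm_prodWord_comp_proj_le A x n
  have hterm : Continuous fun p : (Fin n → ι) × ι ↦
      prodWord A p.1 ∘L ContinuousLinearMap.proj (R := ℝ) (φ := fun _ : ι ↦ E) p.2 :=
    continuous_of_discreteTopology
  have hpair : Continuous fun x : ℕ → ι ↦ (initWord x n, x n) := by
    unfold initWord
    fun_prop
  exact hterm.comp hpair

lemma isCompact_range_coding (hA : ‖A‖ < 1) (a : ι → E) :
    IsCompact (Set.range fun x ↦ coding A x a) :=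
  isCompact_range ((continuous_coding hA).clm_apply continuous_const)

end Coding

section Transversality

open ContinuousLinearMap (adjoint)

variable {ι E : Type*} [Fintype ι] [NormedAddCommGroup E]

lemma norm_single_sub_single_le [DecidableEq ι] {i j : ι} (hij : i ≠ j) (ζ : E) :
    ‖(Pi.single i ζ - Pi.single j ζ : ι → E)‖ ≤ ‖ζ‖ := by
  refine (pi_norm_le_iff_of_nonneg (norm_nonneg ζ)).2 fun k ↦ ?_
  rcases eq_or_ne k i with rfl | hki
  · simp [hij]
  rcases eq_or_ne k j with rfl | hkj
  · simp [hki]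
  · simp [hki, hkj]

variable [InnerProductSpace ℝ E]

lemma mul_sq_norm_le_inner_sub {ζ u v : E} {c : ℝ} (hu : ‖u - ζ‖ ≤ c * ‖ζ‖)
    (hv : ‖v + ζ‖ ≤ c * ‖ζ‖) : 2 * (1 - c) * ‖ζ‖ ^ 2 ≤ inner ℝ ζ (u - v) := by
  have hdecomp : inner ℝ ζ (u - v) = 2 * ‖ζ‖ ^ 2 + inner ℝ ζ (u - ζ) - inner ℝ ζ (v + ζ) := by
    simp only [inner_sub_right, inner_add_right, real_inner_self_eq_norm_sq]
    ring
  have hu' := neg_le_of_abs_le (abs_real_inner_le_norm ζ (u - ζ))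
  have hv' := real_inner_le_norm ζ (v + ζ)
  have := mul_le_mul_of_nonneg_left hu (norm_nonneg ζ)
  have := mul_le_mul_of_nonneg_left hv (norm_nonneg ζ)
  nlinarith

variable [CompleteSpace E]

/-- `coding A x`, with the translation vectors forming a Euclidean space. -/
def euclideanCoding (A : ι → E →L[ℝ] E) (x : ℕ → ι) : PiLp 2 (fun _ : ι ↦ E) →L[ℝ] E :=
  coding A x ∘L PiLp.continuousLinearEquiv 2 ℝ (fun _ : ι ↦ E)

variable {A : ι → E →L[ℝ] E}

/-- A translation vector equal to `ζ` at `x l`, to `-ζ` at `y l` and to `0` elsewhere moves the two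
coded points apart: their leading terms contribute `2ζ`, and the tails, of ratio at most
`‖A‖ / (1 - ‖A‖) < 1`, cannot cancel it. -/
theorem mul_norm_adjoint_prodWord_le (hA : ‖A‖ < 1 / 2) {x y : ℕ → ι} {l : ℕ}
    (h : ∀ k < l, x k = y k) (hl : x l ≠ y l) (ξ : E) :
    (1 - 2 * ‖A‖) * ‖adjoint (prodWord A (initWord x l)) ξ‖
      ≤ ‖adjoint (euclideanCoding A x - euclideanCoding A y) ξ‖ := by
  classical
  set ρ := ‖A‖
  have hρ : 0 ≤ ρ := norm_nonneg A
  set ζ := adjoint (prodWord A (initWord x l)) ξ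
  set b : ι → E := Pi.single (x l) ζ - Pi.single (y l) ζ with hb
  have hbx : b (x l) = ζ := by simp [hb, hl]
  have hby : b (y l) = -ζ := by simp [hb, hl.symm]
  have hb_sup : ‖b‖ ≤ ‖ζ‖ := norm_single_sub_single_le hl ζ
  have hb_euclidean : ‖WithLp.toLp 2 b‖ ≤ 2 * ‖ζ‖ := by
    rw [hb, WithLp.toLp_sub, two_mul]
    exact (norm_sub_le _ _).trans (by simp)
  have hζ : 2 * (1 - ρ / (1 - ρ)) * ‖ζ‖ ^ 2
      ≤ inner ℝ ζ (coding A (fun j ↦ x (j + l)) b - coding A (fun j ↦ y (j + l)) b) := by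
    have hdiv : 0 ≤ ρ / (1 - ρ) := div_nonneg hρ (by linarith)
    have hx := norm_coding_sub_le (by linarith) (fun j ↦ x (j + l)) b
    have hy := norm_coding_sub_le (by linarith) (fun j ↦ y (j + l)) b
    simp only [zero_add, hbx, hby, sub_neg_eq_add] at hx hy
    exact mul_sq_norm_le_inner_sub (hx.trans (by gcongr)) (hy.trans (by gcongr))
  have hupper : inner ℝ ζ (coding A (fun j ↦ x (j + l)) b - coding A (fun j ↦ y (j + l)) b)
      ≤ ‖adjoint (euclideanCoding A x - euclideanCoding A y) ξ‖ * (2 * ‖ζ‖) := by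
    calc _ = inner ℝ (adjoint (euclideanCoding A x - euclideanCoding A y) ξ) (WithLp.toLp 2 b) := by
          rw [ContinuousLinearMap.adjoint_inner_left, ContinuousLinearMap.adjoint_inner_left,
            ← coding_sub_coding (by linarith) h]
          rfl
      _ ≤ _ := (real_inner_le_norm _ _).trans (by gcongr)
  have hratio : ρ / (1 - ρ) ≤ 2 * ρ := (div_le_iff₀ (by linarith)).2 (by nlinarith)
  rcases (norm_nonneg ζ).eq_or_lt with hζ_zero | hζ_pos
  · simp [← hζ_zero]
  · refine le_of_mul_le_mul_right ?_ (mul_pos two_pos hζ_pos)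
    nlinarith [mul_le_mul_of_nonneg_right hratio (sq_nonneg ‖ζ‖)]

end Transversality

section Blocks

open ContinuousLinearMap (adjoint)
open scoped ENNReal

/-- Concatenation of a sequence of words of length `n`. -/
def flatten {ι : Type*} {n : ℕ} [NeZero n] (ω : ℕ → Fin n → ι) : ℕ → ι :=
  fun k ↦ Function.uncurry ω (Nat.divModEquiv n k)

section Flatten

variable {ι M : Type*} [Monoid M] {n : ℕ} [NeZero n]

lemma flatten_mul_add (ω : ℕ → Fin n → ι) (k : ℕ) (j : Fin n) :
    flatten ω (k * n + j) = ω k j := by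
  simpa [flatten] using congrArg (Function.uncurry ω) ((Nat.divModEquiv n).apply_symm_apply (k, j))

lemma flatten_injective : Function.Injective (flatten (ι := ι) (n := n)) := fun ω ω' h ↦ by
  ext k j
  rw [← flatten_mul_add ω, h, flatten_mul_add]

lemma initWord_flatten (ω : ℕ → Fin n → ι) (k : ℕ) :
    initWord (fun j ↦ flatten ω (j + k * n)) n = ω k := by
  ext j
  simpa [initWord, add_comm] using flatten_mul_add ω k j

lemma prodWord_initWord_flatten (T : ι → M) (ω : ℕ → Fin n → ι) (k : ℕ) :
    prodWord T (initWord (flatten ω) (k * n)) = prodWord (prodWord T) (initWord ω k) := by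
  induction k with
  | zero => rw [Nat.zero_mul, prodWord_zero, prodWord_zero]
  | succ k ih =>
    rw [Nat.succ_mul, prodWord_initWord_add, initWord_flatten, ih, prodWord_initWord_succ_last]

lemma prodWord_initWord_flatten_comp {N : Type*} {w : N → Fin n → ι} {T : ι → M} {S : N → Mˣ}
    (hS : ∀ I, S I = prodWord T (w I)) (ω : ℕ → N) (k : ℕ) :
    prodWord T (initWord (flatten (w ∘ ω)) (k * n)) = prodWord S (initWord ω k) := by
  rw [prodWord_initWord_flatten, ← Units.coeHom_apply, map_prodWord]
  simp only [Units.coeHom_apply, hS]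
  rfl

lemma initWord_div_eq_of_flatten_eq {ω ω' : ℕ → Fin n → ι} {l : ℕ}
    (h : ∀ k < l, flatten ω k = flatten ω' k) :
    initWord ω (l / n) = initWord ω' (l / n) := by
  refine initWord_eq_initWord_iff.2 fun k hk ↦ funext fun j ↦ ?_
  have hlt : k * n + j < l := by
    have := Nat.div_mul_le_self l n
    have := Nat.mul_le_mul_right n (Nat.succ_le_of_lt hk)
    have := j.2
    lia
  rw [← flatten_mul_add ω, h _ hlt, flatten_mul_add]

end Flatten

section AgreementSum

variable {N : Type*} [DecidableEq N]

/-- The sum of `f J` over all common initial words `J` of the sequences `ω` and `ω'`. -/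
def agreementSum (f : ∀ k, (Fin k → N) → ℝ≥0∞) (ω ω' : ℕ → N) : ℝ≥0∞ :=
  ∑' k, if initWord ω k = initWord ω' k then f k (initWord ω k) else 0

lemma le_agreementSum (f : ∀ k, (Fin k → N) → ℝ≥0∞) {ω ω' : ℕ → N} {k : ℕ}
    (h : initWord ω k = initWord ω' k) : f k (initWord ω k) ≤ agreementSum f ω ω' :=
  (if_pos h).symm.trans_le (ENNReal.le_tsum k)

lemma agreementSum_self_eq_top {f : ∀ k, (Fin k → N) → ℝ≥0∞} {ε : ℝ≥0∞} (hε : ε ≠ 0)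
    {ω : ℕ → N} (h : ∀ k, ε ≤ f k (initWord ω k)) : agreementSum f ω ω = ∞ := by
  refine top_unique ((ENNReal.tsum_const_eq_top_of_ne_zero (α := ℕ) hε).symm.trans_le ?_)
  simpa [agreementSum] using ENNReal.tsum_le_tsum h

end AgreementSum

section Kernel

variable {ι N E : Type*} [Fintype ι] [NormedAddCommGroup E] [InnerProductSpace ℝ E]
  {A : ι → E →L[ℝ] E} {n : ℕ} [NeZero n] {w : N → Fin n → ι}
  {S : N → (E →L[ℝ] E)ˣ}

lemma norm_adjoint_prodWord_block_le [Fintype N] [CompleteSpace E] (hA : ‖A‖ ≤ 1)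
    (hS : ∀ I, S I = prodWord A (w I)) (ω : ℕ → N) (l : ℕ) (ξ : E) :
    ‖adjoint (prodWord S (initWord ω (l / n))).val ξ‖
      ≤ ‖fun I ↦ (S I)⁻¹.val‖ * ‖adjoint (prodWord A (initWord (flatten (w ∘ ω)) l)) ξ‖ := by
  set k := l / n
  set x := flatten (w ∘ ω)
  obtain ⟨r, hr⟩ : ∃ r, (k + 1) * n = l + r :=
    Nat.exists_eq_add_of_le (by rw [mul_comm]; exact (Nat.lt_mul_div_succ l (NeZero.pos n)).le)
  set R := prodWord A (initWord (fun j ↦ x (j + l)) r)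
  have hR : ‖R‖ ≤ 1 := (norm_prodWord_le A _).trans (pow_le_one₀ (norm_nonneg A) hA)
  have hQ : (prodWord S (initWord ω k)).val = prodWord A (initWord x l) * R * (S (ω k))⁻¹.val := by
    rw [← prodWord_initWord_add, ← hr, prodWord_initWord_flatten_comp hS,
      prodWord_initWord_succ_last, Units.val_mul, Units.mul_inv_cancel_right]
  calc ‖adjoint (prodWord S (initWord ω k)).val ξ‖
      = ‖adjoint (S (ω k))⁻¹.val (adjoint R (adjoint (prodWord A (initWord x l)) ξ))‖ := by
        rw [hQ, ← ContinuousLinearMap.star_eq_adjoint, star_mul, star_mul]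
        rfl
    _ ≤ ‖fun I ↦ (S I)⁻¹.val‖ * (1 * ‖adjoint (prodWord A (initWord x l)) ξ‖) := by
        refine ContinuousLinearMap.le_of_opNorm_le_of_le _ ?_
          (ContinuousLinearMap.le_of_opNorm_le _ ?_ _)
        · rw [LinearIsometryEquiv.norm_map]
          exact norm_le_pi_norm (fun I ↦ (S I)⁻¹.val) _
        · rwa [LinearIsometryEquiv.norm_map]
    _ = _ := by rw [one_mul]

lemma exists_norm_adjoint_prodWord_block_le [Fintype N] [CompleteSpace E] (hA : ‖A‖ < 1 / 2)
    (hw : Function.Injective w) (hS : ∀ I, S I = prodWord A (w I)) {ω ω' : ℕ → N} (hω : ω ≠ ω') :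
    ∃ k, initWord ω k = initWord ω' k ∧ ∀ ξ,
      (1 - 2 * ‖A‖) * ‖adjoint (prodWord S (initWord ω k)).val ξ‖ ≤ ‖fun I ↦ (S I)⁻¹.val‖ * ‖adjoint
        (euclideanCoding A (flatten (w ∘ ω)) - euclideanCoding A (flatten (w ∘ ω'))) ξ‖ := by
  classical
  have hdiff : ∃ l, flatten (w ∘ ω) l ≠ flatten (w ∘ ω') l :=
    Function.ne_iff.1 (flatten_injective.ne (hw.comp_left.ne hω))
  set l := Nat.find hdiff
  have hagree : ∀ k < l, flatten (w ∘ ω) k = flatten (w ∘ ω') k := fun k hk ↦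
    not_not.1 (Nat.find_min hdiff hk)
  refine ⟨l / n, hw.comp_left (initWord_div_eq_of_flatten_eq hagree), fun ξ ↦ ?_⟩
  have hA0 : 0 ≤ 1 - 2 * ‖A‖ := by linarith
  calc _ ≤ (1 - 2 * ‖A‖) * (‖fun I ↦ (S I)⁻¹.val‖
        * ‖adjoint (prodWord A (initWord (flatten (w ∘ ω)) l)) ξ‖) := by
        gcongr
        exact norm_adjoint_prodWord_block_le (by linarith) hS ω l ξ
    _ = ‖fun I ↦ (S I)⁻¹.val‖ * ((1 - 2 * ‖A‖)
        * ‖adjoint (prodWord A (initWord (flatten (w ∘ ω)) l)) ξ‖) := by ring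
    _ ≤ _ := by
        gcongr
        exact mul_norm_adjoint_prodWord_le hA hagree (Nat.find_spec hdiff) ξ

variable [Finite N] [FiniteDimensional ℝ E] [MeasurableSpace E] [BorelSpace E] [DecidableEq N]

theorem exists_enorm_charFun_le_agreementSum (hA : ‖A‖ < 1 / 2) (hw : Function.Injective w)
    (hS : ∀ I, S I = prodWord A (w I)) :
    ∃ c > 0, ∀ (ω ω' : ℕ → N) (ξ : E),
      ‖charFun ((gaussianMeasure (PiLp 2 fun _ : ι ↦ E)).map (euclideanCoding A (flatten (w ∘ ω))
        - euclideanCoding A (flatten (w ∘ ω')))) ξ‖ₑ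
      ≤ agreementSum (fun _ J ↦
        ENNReal.ofReal (Real.exp (-c * ‖adjoint (prodWord S J).val ξ‖ ^ 2))) ω ω' := by
  have := Fintype.ofFinite N
  set C := ‖fun I ↦ (S I)⁻¹.val‖ + 1
  have hA0 : 0 < 1 - 2 * ‖A‖ := by linarith
  refine ⟨(4 * Real.pi)⁻¹ * ((1 - 2 * ‖A‖) / C) ^ 2, by positivity, fun ω ω' ξ ↦ ?_⟩
  set c := (4 * Real.pi)⁻¹ * ((1 - 2 * ‖A‖) / C) ^ 2
  rcases eq_or_ne ω ω' with rfl | hω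
  · refine le_top.trans_eq (agreementSum_self_eq_top (ε := .ofReal (Real.exp (-c * ‖ξ‖ ^ 2)))
      (by simp [Real.exp_pos]) fun k ↦ ?_).symm
    have hnorm : ‖adjoint (prodWord S (initWord ω k)).val ξ‖ ≤ 1 * ‖ξ‖ := by
      refine ContinuousLinearMap.le_of_opNorm_le _ ?_ ξ
      rw [LinearIsometryEquiv.norm_map, ← prodWord_initWord_flatten_comp hS]
      exact (norm_prodWord_le A _).trans (pow_le_one₀ (norm_nonneg A) (by linarith))
    simp only [neg_mul]
    gcongr
    simpa using hnorm
  obtain ⟨k, hk, hξ⟩ := exists_norm_adjoint_prodWord_block_le hA hw hS hω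
  refine le_trans ?_ (le_agreementSum _ hk)
  set L := euclideanCoding A (flatten (w ∘ ω)) - euclideanCoding A (flatten (w ∘ ω'))
  set η := adjoint (prodWord S (initWord ω k)).val ξ
  have hle : (1 - 2 * ‖A‖) / C * ‖η‖ ≤ ‖adjoint L ξ‖ := by
    rw [div_mul_eq_mul_div, div_le_iff₀' (by positivity)]
    exact (hξ ξ).trans (by gcongr; simp [C])
  rw [charFun_map_gaussianMeasure, ← ofReal_norm, Complex.norm_real,
    Real.norm_of_nonneg (by positivity)]
  refine ENNReal.ofReal_le_ofReal (Real.exp_le_exp.2 ?_)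
  calc -(4 * Real.pi)⁻¹ * ‖adjoint L ξ‖ ^ 2
      ≤ -(4 * Real.pi)⁻¹ * ((1 - 2 * ‖A‖) / C * ‖η‖) ^ 2 := by
        exact mul_le_mul_of_nonpos_left (by gcongr) (by simp [Real.pi_pos.le])
    _ = -c * ‖η‖ ^ 2 := by ring

end Kernel

end Blocks

section Energy

open ProbabilityTheory
open scoped ENNReal

section Bernoulli

variable {N : Type*} [MeasurableSpace N] [MeasurableSingletonClass N] (P : Measure N)
  [IsProbabilityMeasure P]

lemma infinitePi_initWord_eq {k : ℕ} (J : Fin k → N) :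
    Measure.infinitePi (fun _ : ℕ ↦ P) {ω | initWord ω k = J} = ∏ j, P {J j} := by
  have hpi : {ω : ℕ → N | initWord ω k = J}
      = (Finset.range k : Set ℕ).pi fun i ↦ {a | ∀ h : i < k, a = J ⟨i, h⟩} := by
    ext ω
    simp [initWord, funext_iff, Fin.forall_iff]
  have hset (j : Fin k) : {a | ∀ h : (j : ℕ) < k, a = J ⟨j, h⟩} = {J j} := by ext; simp
  rw [hpi, Measure.infinitePi_pi, Finset.prod_range]
  · simp only [hset]
  · intro i hi
    lift i to Fin k using Finset.mem_range.1 hi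
    simpa only [hset] using measurableSet_singleton (J i)

variable [Fintype N] [DecidableEq N]

lemma lintegral_agreementSum (f : ∀ k, (Fin k → N) → ℝ≥0∞) :
    ∫⁻ q, agreementSum f q.1 q.2
      ∂(Measure.infinitePi fun _ : ℕ ↦ P).prod (Measure.infinitePi fun _ ↦ P)
      = ∑' k, ∑ J : Fin k → N, (∏ j, P {J j}) ^ 2 * f k J := by
  have hcyl {k : ℕ} (J : Fin k → N) : MeasurableSet {ω : ℕ → N | initWord ω k = J} :=
    measurableSet_eq_fun (measurable_pi_lambda _ fun j ↦ measurable_pi_apply (j : ℕ))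
      measurable_const
  have hterm (k : ℕ) (q : (ℕ → N) × (ℕ → N)) :
      (if initWord q.1 k = initWord q.2 k then f k (initWord q.1 k) else 0)
      = ∑ J : Fin k → N,
        ({ω | initWord ω k = J} ×ˢ {ω | initWord ω k = J}).indicator (fun _ ↦ f k J) q := by
    simp [Set.indicator_apply, ite_and, eq_comm]
  have hmeas {k : ℕ} (J : Fin k → N) : Measurable
      (({ω : ℕ → N | initWord ω k = J} ×ˢ {ω | initWord ω k = J}).indicator fun _ ↦ f k J) :=
    measurable_const.indicator ((hcyl J).prod (hcyl J))
  simp only [agreementSum, hterm]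
  rw [lintegral_tsum fun k ↦ (Finset.measurable_sum _ fun J _ ↦ hmeas J).aemeasurable]
  congr! 2 with k
  rw [lintegral_finsetSum _ fun J _ ↦ hmeas J]
  congr! 1 with J
  rw [lintegral_indicator_const ((hcyl J).prod (hcyl J)), Measure.prod_prod,
    infinitePi_initWord_eq, sq, mul_comm]

end Bernoulli

lemma rpow_mul_exp_neg_mul_sq_le {c s t : ℝ} (hc : 0 < c) (hs : 0 < s) (ht : 0 ≤ t) :
    t ^ s * Real.exp (-c * t ^ 2) ≤ (s / c) ^ (s / 2) * Real.exp (-(c / 2) * t ^ 2) := by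
  have hsq : t ^ 2 ≤ s / c * Real.exp (c * t ^ 2 / s) := by
    calc t ^ 2 = s / c * (c * t ^ 2 / s) := by field_simp
      _ ≤ _ := by
        gcongr
        linarith [Real.add_one_le_exp (c * t ^ 2 / s)]
  calc t ^ s * Real.exp (-c * t ^ 2) = (t ^ 2) ^ (s / 2) * Real.exp (-c * t ^ 2) := by
        rw [← Real.rpow_natCast_mul ht]
        congr 2
        push_cast
        ring
    _ ≤ (s / c * Real.exp (c * t ^ 2 / s)) ^ (s / 2) * Real.exp (-c * t ^ 2) := by gcongr
    _ = (s / c) ^ (s / 2) * Real.exp (-(c / 2) * t ^ 2) := by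
        rw [Real.mul_rpow (by positivity) (Real.exp_pos _).le, ← Real.exp_mul, mul_assoc,
          ← Real.exp_add]
        congr 2
        field_simp
        ring

variable {E : Type*} [NormedAddCommGroup E] [InnerProductSpace ℝ E]

/-- The factor `‖u⁻¹‖ ^ s |det u|⁻¹ = α_d(u) ^ (-s) |det u|⁻¹` by which the substitution `η = u ξ`
may increase an integral with weight `‖ξ‖ ^ s`. -/
def inverseWeight (s : ℝ) (u : (E →L[ℝ] E)ˣ) : ℝ≥0∞ := ‖u⁻¹.val‖ₑ ^ s * ‖u.val.det‖ₑ⁻¹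

lemma inverseWeight_mul_le {s : ℝ} (hs : 0 ≤ s) (u v : (E →L[ℝ] E)ˣ) :
    inverseWeight s (u * v) ≤ inverseWeight s u * inverseWeight s v := by
  have hdet : (u * v).val.det = u.val.det * v.val.det := map_mul LinearMap.det _ _
  calc inverseWeight s (u * v)
      = ‖v⁻¹.val * u⁻¹.val‖ₑ ^ s * (‖u.val.det‖ₑ⁻¹ * ‖v.val.det‖ₑ⁻¹) := by
        rw [inverseWeight, mul_inv_rev, Units.val_mul, hdet, enorm_mul u.val.det,
          ENNReal.mul_inv (.inr enorm_ne_top) (.inl enorm_ne_top)]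
    _ ≤ (‖v⁻¹.val‖ₑ * ‖u⁻¹.val‖ₑ) ^ s * (‖u.val.det‖ₑ⁻¹ * ‖v.val.det‖ₑ⁻¹) := by
        gcongr
        exact ENNReal.coe_le_coe.2 (nnnorm_mul_le v⁻¹.val u⁻¹.val)
    _ = inverseWeight s u * inverseWeight s v := by
        rw [ENNReal.mul_rpow_of_nonneg _ _ hs, inverseWeight, inverseWeight]
        ring

lemma inverseWeight_one_le {s : ℝ} (hs : 0 ≤ s) : inverseWeight s (1 : (E →L[ℝ] E)ˣ) ≤ 1 := by
  have hdet : (1 : E →L[ℝ] E).det = 1 := map_one LinearMap.det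
  have hnorm : ‖(1 : E →L[ℝ] E)‖ₑ ≤ 1 :=
    ENNReal.coe_le_coe.2 ContinuousLinearMap.norm_id_le
  simpa [inverseWeight, hdet] using ENNReal.rpow_le_one hnorm hs

variable [FiniteDimensional ℝ E]

lemma det_adjoint (B : E →L[ℝ] E) : (ContinuousLinearMap.adjoint B).det = B.det := by
  let b := stdOrthonormalBasis ℝ E
  calc (ContinuousLinearMap.adjoint B).det
      = LinearMap.det (LinearMap.adjoint (B : E →ₗ[ℝ] E)) := rfl
    _ = B.det := by
        rw [← LinearMap.det_toMatrix b.toBasis, LinearMap.toMatrix_adjoint,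
          Matrix.det_conjTranspose, LinearMap.det_toMatrix, star_trivial, ContinuousLinearMap.det]

lemma inverseWeight_star (s : ℝ) (u : (E →L[ℝ] E)ˣ) :
    inverseWeight s (star u) = inverseWeight s u := by
  rw [inverseWeight, ← star_inv, Units.coe_star, Units.coe_star,
    ContinuousLinearMap.star_eq_adjoint, ContinuousLinearMap.star_eq_adjoint, det_adjoint,
    LinearIsometryEquiv.enorm_map, inverseWeight]

variable [MeasurableSpace E] [BorelSpace E]

lemma lintegral_enorm_rpow_mul_exp_lt_top {c s : ℝ} (hc : 0 < c) (hs : 0 < s) :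
    ∫⁻ η : E, ‖η‖ₑ ^ s * ENNReal.ofReal (Real.exp (-c * ‖η‖ ^ 2)) < ∞ := by
  refine lt_of_le_of_lt (lintegral_mono fun η ↦ ?_)
    ((integrable_exp_neg_mul_sq_norm E (half_pos hc)).const_mul
      ((s / c) ^ (s / 2))).lintegral_lt_top
  rw [← ofReal_norm, ENNReal.ofReal_rpow_of_nonneg (norm_nonneg η) hs.le,
    ← ENNReal.ofReal_mul (by positivity)]
  exact ENNReal.ofReal_le_ofReal (rpow_mul_exp_neg_mul_sq_le hc hs (norm_nonneg η))

lemma lintegral_enorm_rpow_mul_comp_le {s : ℝ} (hs : 0 ≤ s) (u : (E →L[ℝ] E)ˣ) {g : E → ℝ≥0∞}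
    (hg : Measurable g) :
    ∫⁻ ξ, ‖ξ‖ₑ ^ s * g (u.val ξ) ≤ inverseWeight s u * ∫⁻ η, ‖η‖ₑ ^ s * g η := by
  have hdet : LinearMap.det (u.val : E →ₗ[ℝ] E) ≠ 0 :=
    ((u.isUnit.map (ContinuousLinearMap.toLinearMapRingHom)).map LinearMap.det).ne_zero
  have hmap := Measure.map_linearMap_addHaar_eq_smul_addHaar (volume : Measure E) hdet
  have hmeas : Measurable fun η : E ↦ ‖η‖ₑ ^ s * g η := by fun_prop
  calc ∫⁻ ξ, ‖ξ‖ₑ ^ s * g (u.val ξ)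
      ≤ ∫⁻ ξ, ‖u⁻¹.val‖ₑ ^ s * (‖u.val ξ‖ₑ ^ s * g (u.val ξ)) := by
        refine lintegral_mono fun ξ ↦ ?_
        rw [← mul_assoc, ← ENNReal.mul_rpow_of_nonneg _ _ hs]
        gcongr
        calc ‖ξ‖ₑ = ‖u⁻¹.val (u.val ξ)‖ₑ := by
              rw [← mul_apply_eq_comp, u.inv_mul, one_apply_eq_self]
          _ ≤ _ := u⁻¹.val.le_opENorm _
    _ = ‖u⁻¹.val‖ₑ ^ s * ∫⁻ η, ‖η‖ₑ ^ s * g η ∂volume.map (u.val : E →ₗ[ℝ] E) := by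
        rw [lintegral_const_mul _ (by fun_prop)]
        congr 1
        exact (lintegral_map hmeas u.val.measurable).symm
    _ = inverseWeight s u * ∫⁻ η, ‖η‖ₑ ^ s * g η := by
        rw [hmap, lintegral_smul_measure, inverseWeight, mul_assoc, smul_eq_mul,
          ← Real.enorm_eq_ofReal_abs, enorm_inv hdet,
          ContinuousLinearMap.det]

variable {N : Type*}

lemma lintegral_enorm_rpow_mul_comp_prodWord_le {s : ℝ} (hs : 0 ≤ s) (S : N → (E →L[ℝ] E)ˣ) {k : ℕ}
    (J : Fin k → N) {g : E → ℝ≥0∞} (hg : Measurable g) :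
    ∫⁻ ξ, ‖ξ‖ₑ ^ s * g (ContinuousLinearMap.adjoint (prodWord S J).val ξ)
      ≤ (∏ j, inverseWeight s (S (J j))) * ∫⁻ η, ‖η‖ₑ ^ s * g η := by
  have hweight : inverseWeight s (star (prodWord S J)) ≤ ∏ j, inverseWeight s (S (J j)) := by
    rw [inverseWeight_star]
    exact apply_prodWord_le_prod (inverseWeight_one_le hs) (inverseWeight_mul_le hs) S J
  exact (lintegral_enorm_rpow_mul_comp_le hs (star (prodWord S J)) hg).trans (by gcongr)

theorem lintegral_agreementSum_gaussian_lt_top [MeasurableSpace N] [MeasurableSingletonClass N]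
    [Fintype N] [DecidableEq N] {P : Measure N} [IsProbabilityMeasure P] {S : N → (E →L[ℝ] E)ˣ}
    {c s : ℝ} (hc : 0 < c) (hs : 0 < s) (hP : ∑ I, P {I} ^ 2 * inverseWeight s (S I) < 1) :
    ∫⁻ ξ, ‖ξ‖ₑ ^ s * ∫⁻ q, agreementSum (fun _ J ↦ ENNReal.ofReal
        (Real.exp (-c * ‖ContinuousLinearMap.adjoint (prodWord S J).val ξ‖ ^ 2))) q.1 q.2
      ∂(Measure.infinitePi fun _ : ℕ ↦ P).prod (Measure.infinitePi fun _ ↦ P) < ∞ := by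
  set g : E → ℝ≥0∞ := fun η ↦ ENNReal.ofReal (Real.exp (-c * ‖η‖ ^ 2))
  have hg : Measurable g := by fun_prop
  set C := ∫⁻ η, ‖η‖ₑ ^ s * g η
  have hterm (k : ℕ) : ∫⁻ ξ, ∑ J : Fin k → N, (∏ j, P {J j}) ^ 2
      * (‖ξ‖ₑ ^ s * g (ContinuousLinearMap.adjoint (prodWord S J).val ξ))
      ≤ (∑ I, P {I} ^ 2 * inverseWeight s (S I)) ^ k * C := by
    rw [lintegral_finsetSum _ fun J _ ↦ by fun_prop, Fintype.sum_pow, Finset.sum_mul]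
    refine Finset.sum_le_sum fun J _ ↦ ?_
    rw [lintegral_const_mul _ (by fun_prop), Finset.prod_mul_distrib, Finset.prod_pow, mul_assoc]
    gcongr
    exact lintegral_enorm_rpow_mul_comp_prodWord_le hs.le S J hg
  calc _ = ∫⁻ ξ, ∑' k, ∑ J : Fin k → N, (∏ j, P {J j}) ^ 2
        * (‖ξ‖ₑ ^ s * g (ContinuousLinearMap.adjoint (prodWord S J).val ξ)) := by
        congr! 2 with ξ
        rw [lintegral_agreementSum, ← ENNReal.tsum_mul_left]
        simp only [Finset.mul_sum, mul_left_comm]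
        rfl
    _ ≤ ∑' k, (∑ I, P {I} ^ 2 * inverseWeight s (S I)) ^ k * C := by
        rw [lintegral_tsum fun k ↦ by fun_prop]
        exact ENNReal.tsum_le_tsum hterm
    _ = (1 - ∑ I, P {I} ^ 2 * inverseWeight s (S I))⁻¹ * C := by
        rw [ENNReal.tsum_mul_right, ENNReal.tsum_geometric]
    _ < ∞ := ENNReal.mul_lt_top (by simpa using hP) (lintegral_enorm_rpow_mul_exp_lt_top hc hs)

end Energy

section AlmostSureInterior

open scoped ENNReal

variable {ι N E : Type*}

lemma continuous_flatten_comp [TopologicalSpace ι] [TopologicalSpace N] [DiscreteTopology N] {n : ℕ}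
    [NeZero n] (w : N → Fin n → ι) : Continuous fun ω : ℕ → N ↦ flatten (w ∘ ω) :=
  continuous_pi fun k ↦
    (continuous_of_discreteTopology (f := fun a ↦ w a (Nat.divModEquiv n k).2)).comp
      (continuous_apply (Nat.divModEquiv n k).1)

lemma exists_pmf_sum_sq_mul_inv_lt_one [Fintype N] {φ : N → ℝ≥0∞} (hφ : ∀ I, φ I ≠ ∞)
    (hsum : 1 < ∑ I, φ I) : ∃ p : PMF N, ∑ I, p I ^ 2 * (φ I)⁻¹ < 1 := by
  have hZ : ∑' I, φ I = ∑ I, φ I := tsum_fintype φ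
  have hZ_zero : ∑ I, φ I ≠ 0 := (zero_lt_one.trans hsum).ne'
  have hZ_top : ∑ I, φ I ≠ ∞ := ENNReal.sum_ne_top.2 fun I _ ↦ hφ I
  refine ⟨PMF.normalize φ (hZ ▸ hZ_zero) (hZ ▸ hZ_top), ?_⟩
  calc ∑ I, PMF.normalize φ (hZ ▸ hZ_zero) (hZ ▸ hZ_top) I ^ 2 * (φ I)⁻¹
      = ∑ I, φ I * (φ I)⁻¹ * (φ I * (∑ I, φ I)⁻¹ ^ 2) := by
        congr! 1 with I
        rw [PMF.normalize_apply, hZ]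
        ring
    _ ≤ ∑ I, 1 * (φ I * (∑ I, φ I)⁻¹ ^ 2) := by
        gcongr
        exact ENNReal.mul_inv_le_one _
    _ = (∑ I, φ I)⁻¹ := by
        simp only [one_mul]
        rw [← Finset.sum_mul, sq, ← mul_assoc, ENNReal.mul_inv_cancel hZ_zero hZ_top, one_mul]
    _ < 1 := ENNReal.inv_lt_one.2 hsum

variable [NormedAddCommGroup E] [InnerProductSpace ℝ E]

/-- The least singular value `α_d(B) = ‖B⁻¹‖⁻¹` of an operator, equal to `0` if `B` is singular
since `Ring.inverse` is then `0`. -/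
def leastSingularValue (B : E →L[ℝ] E) : ℝ := ‖Ring.inverse B‖⁻¹

lemma leastSingularValue_nonneg (B : E →L[ℝ] E) : 0 ≤ leastSingularValue B :=
  inv_nonneg.2 (norm_nonneg _)

variable [Fintype ι]

/-- The number `t(A)`, the infimum of those `t ≥ 0` for which all sums
`∑_{|I| = n} α_d(A_I) ^ t |det A_I|` with `n ≥ 1` are at most `1`. -/
def criticalExponent (A : ι → E →L[ℝ] E) : ℝ :=
  sInf {t : ℝ | 0 ≤ t ∧ ∀ n : ℕ, 0 < n →
    ∑ I : Fin n → ι, leastSingularValue (prodWord A I) ^ t * |(prodWord A I).det| ≤ 1}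

lemma exists_one_lt_sum_of_lt_criticalExponent {A : ι → E →L[ℝ] E} {s : ℝ} (hs : 0 ≤ s)
    (h : s < criticalExponent A) :
    ∃ n, 0 < n ∧ 1 < ∑ I : Fin n → ι,
      leastSingularValue (prodWord A I) ^ s * |(prodWord A I).det| := by
  have hbdd : BddBelow {t : ℝ | 0 ≤ t ∧ ∀ n : ℕ, 0 < n →
    ∑ I : Fin n → ι, leastSingularValue (prodWord A I) ^ t * |(prodWord A I).det| ≤ 1} :=
    ⟨0, fun t ht ↦ ht.1⟩
  by_contra! hle
  exact notMem_of_lt_csInf h hbdd ⟨hs, hle⟩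

lemma inverseWeight_le_inv {s : ℝ} (hs : 0 < s) (u : (E →L[ℝ] E)ˣ) :
    inverseWeight s u ≤ (ENNReal.ofReal (leastSingularValue u.val ^ s * |u.val.det|))⁻¹ := by
  rw [leastSingularValue, Ring.inverse_unit]
  rcases (norm_nonneg u⁻¹.val).eq_or_lt with h | h
  · simp [← h, Real.zero_rpow hs.ne']
  · have hpos : 0 < ENNReal.ofReal ‖u⁻¹.val‖ ^ s :=
      ENNReal.rpow_pos (ENNReal.ofReal_pos.2 h) ENNReal.ofReal_ne_top
    rw [inverseWeight, ← ofReal_norm u⁻¹.val, ENNReal.ofReal_mul (by positivity),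
      ← ENNReal.ofReal_rpow_of_pos (inv_pos.2 h), ENNReal.ofReal_inv_of_pos h,
      ← Real.enorm_eq_ofReal_abs, ENNReal.inv_rpow, ENNReal.mul_inv (.inr enorm_ne_top)
        (.inl (ENNReal.inv_ne_top.2 hpos.ne')), inv_inv]

variable [FiniteDimensional ℝ E]

lemma det_eq_zero_of_not_isUnit {B : E →L[ℝ] E} (hB : ¬ IsUnit B) :
    B.det = 0 := by
  contrapose! hB
  have : IsUnit (B : E →ₗ[ℝ] E) := (LinearMap.isUnit_iff_isUnit_det _).2 (.mk0 _ hB)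
  exact this.map (Module.End.toContinuousLinearMap E)

lemma exists_pmf_sum_sq_mul_inverseWeight_lt_one {A : ι → E →L[ℝ] E} {s : ℝ}
    (hs : 0 < s) (h : s < criticalExponent A) :
    ∃ (n : ℕ) (_ : 0 < n) (_ : Fintype {I : Fin n → ι // IsUnit (prodWord A I)})
      (p : PMF {I : Fin n → ι // IsUnit (prodWord A I)}),
      ∑ I, p I ^ 2 * inverseWeight s I.2.unit < 1 := by
  classical
  obtain ⟨n, hn, hsum⟩ := exists_one_lt_sum_of_lt_criticalExponent hs.le h
  set φ : (Fin n → ι) → ℝ := fun I ↦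
    leastSingularValue (prodWord A I) ^ s * |(prodWord A I).det|
  have hφ (I : {I : Fin n → ι // IsUnit (prodWord A I)}) : 0 ≤ φ I :=
    mul_nonneg (Real.rpow_nonneg (leastSingularValue_nonneg _) s) (abs_nonneg _)
  have hsum_unit :
      1 < ∑ I : {I : Fin n → ι // IsUnit (prodWord A I)}, ENNReal.ofReal (φ I) := by
    rw [← ENNReal.ofReal_sum_of_nonneg fun I _ ↦ hφ I, ENNReal.one_lt_ofReal,
      Fintype.sum_of_injective Subtype.val Subtype.val_injective _ φ ?_ fun I ↦ rfl]
    · exact hsum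
    · intro I hI
      simp only [φ]
      rw [det_eq_zero_of_not_isUnit fun h ↦ hI ⟨⟨I, h⟩, rfl⟩, abs_zero, mul_zero]
  obtain ⟨p, hp⟩ :=
    exists_pmf_sum_sq_mul_inv_lt_one (fun _ ↦ ENNReal.ofReal_ne_top) hsum_unit
  refine ⟨n, hn, inferInstance, p, lt_of_le_of_lt ?_ hp⟩
  gcongr with I
  exact inverseWeight_le_inv hs I.2.unit

variable [MeasurableSpace E] [BorelSpace E]

lemma measurable_euclideanCoding_flatten [Finite N] [MeasurableSpace N]
    [MeasurableSingletonClass N] {A : ι → E →L[ℝ] E} (hA : ‖A‖ < 1) {n : ℕ} [NeZero n]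
    (w : N → Fin n → ι) :
    Measurable (Function.uncurry fun v (ω : ℕ → N) ↦ euclideanCoding A (flatten (w ∘ ω)) v) := by
  let _ : TopologicalSpace ι := ⊥
  have : DiscreteTopology ι := ⟨rfl⟩
  let _ : TopologicalSpace N := ⊥
  have : DiscreteTopology N := ⟨rfl⟩
  exact (((continuous_coding hA).comp ((continuous_flatten_comp w).comp continuous_snd)).clm_apply
    ((PiLp.continuous_ofLp 2 _).comp continuous_fst)).measurable

theorem ae_nonempty_interior_range_euclideanCoding [Fintype N] [MeasurableSpace N]
    [MeasurableSingletonClass N] {A : ι → E →L[ℝ] E} (hA : ‖A‖ < 1 / 2) {n : ℕ} [NeZero n]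
    {w : N → Fin n → ι} (hw : Function.Injective w) {S : N → (E →L[ℝ] E)ˣ}
    (hS : ∀ I, S I = prodWord A (w I)) {P : Measure N} [IsProbabilityMeasure P]
    {s : ℝ} (hs : Module.finrank ℝ E < s) (hP : ∑ I, P {I} ^ 2 * inverseWeight s (S I) < 1) :
    ∀ᵐ v ∂gaussianMeasure (PiLp 2 fun _ : ι ↦ E),
      (interior (Set.range fun x ↦ euclideanCoding A x v)).Nonempty := by
  classical
  let _ : TopologicalSpace ι := ⊥
  have : DiscreteTopology ι := ⟨rfl⟩
  set μ := Measure.infinitePi fun _ : ℕ ↦ P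
  set Z : (PiLp 2 fun _ : ι ↦ E) → (ℕ → N) → E := fun v ω ↦ euclideanCoding A (flatten (w ∘ ω)) v
  have hZ : Measurable (Function.uncurry Z) := measurable_euclideanCoding_flatten (by linarith) w
  obtain ⟨c, hc, hbound⟩ := exists_enorm_charFun_le_agreementSum hA hw hS
  have henergy : ∫⁻ ξ : E, ‖ξ‖ₑ ^ s * ∫⁻ q, ‖charFun
      ((gaussianMeasure _).map fun v ↦ Z v q.1 - Z v q.2) ξ‖ₑ ∂μ.prod μ < ∞ := by
    refine lt_of_le_of_lt (lintegral_mono fun ξ ↦ ?_)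
      (lintegral_agreementSum_gaussian_lt_top hc ((Nat.cast_nonneg _).trans_lt hs) hP)
    gcongr with q
    exact hbound q.1 q.2 ξ
  filter_upwards [ae_integrable_charFun_map hZ hs henergy] with v hv
  have hZv : Measurable (Z v) := hZ.of_uncurry_left
  have hclosed : IsClosed (Set.range fun x ↦ euclideanCoding A x v) :=
    (isCompact_range_coding (by linarith) (WithLp.ofLp v)).isClosed
  have : IsProbabilityMeasure (μ.map (Z v)) := Measure.isProbabilityMeasure_map hZv.aemeasurable
  refine nonempty_interior_of_integrable_charFun hv hclosed ?_
  exact (ae_map_iff hZv.aemeasurable hclosed.measurableSet).2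
    (.of_forall fun ω ↦ Set.mem_range_self (flatten (w ∘ ω)))

theorem typical_selfAffine_nonempty_interior_of_tParam_gt_general {A : ι → E →L[ℝ] E}
    (hA : ∀ i, ‖A i‖ < 1 / 2) (ht : Module.finrank ℝ E < criticalExponent A) :
    ∀ᵐ a ∂(volume : Measure (ι → E)),
      (interior (Set.range fun x : ℕ → ι ↦
        ∑' n, prodWord A (initWord x n) (a (x n)))).Nonempty := by
  have hA' : ‖A‖ < 1 / 2 := (pi_norm_lt_iff one_half_pos).2 hA
  obtain ⟨s, hs, hst⟩ := exists_between ht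
  obtain ⟨n, hn, _, p, hp⟩ :=
    exists_pmf_sum_sq_mul_inverseWeight_lt_one ((Nat.cast_nonneg _).trans_lt hs) hst
  have : NeZero n := ⟨hn.ne'⟩
  let _ : MeasurableSpace {I : Fin n → ι // IsUnit (prodWord A I)} := ⊤
  have hP : ∑ I, p.toMeasure {I} ^ 2 * inverseWeight s I.2.unit < 1 := by
    simpa only [p.toMeasure_apply_singleton _ (measurableSet_singleton _)] using hp
  refine ae_of_ae_gaussianMeasure (PiLp.continuousLinearEquiv 2 ℝ fun _ : ι ↦ E) ?_
  filter_upwards [ae_nonempty_interior_range_euclideanCoding hA' Subtype.val_injective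
    (fun I ↦ I.2.unit_spec) hs hP] with v hv
  simp only [← coding_apply (hA'.trans one_half_lt_one)]
  exact hv

end AlmostSureInterior

section Matrices

lemma map_ringInverse {M N F : Type*} [MonoidWithZero M] [MonoidWithZero N] [EquivLike F M N]
    [MulEquivClass F M N] (f : F) (x : M) : f (Ring.inverse x) = Ring.inverse (f x) := by
  by_cases hx : IsUnit x
  · obtain ⟨u, rfl⟩ := hx
    rw [Ring.inverse_unit]
    exact (Ring.inverse_unit (Units.map (f : M →* N) u)).symm
  · rw [Ring.inverse_non_unit x hx, Ring.inverse_non_unit (f x) (by rwa [isUnit_map_iff]), map_zero]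

variable (T : Fin m → Matrix (Fin d) (Fin d) ℝ)

lemma toEuclideanCLM_wordProd {n : ℕ} (I : Fin n → Fin m) :
    Matrix.toEuclideanCLM (𝕜 := ℝ) (wordProd T I)
      = prodWord (fun i ↦ Matrix.toEuclideanCLM (𝕜 := ℝ) (T i)) I :=
  map_prodWord (Matrix.toEuclideanCLM (n := Fin d) (𝕜 := ℝ)) T I

lemma attractor_eq_range (a : Fin m → EuclideanSpace ℝ (Fin d)) :
    attractor T a = Set.range fun x : ℕ → Fin m ↦
      ∑' n, prodWord (fun i ↦ Matrix.toEuclideanCLM (𝕜 := ℝ) (T i)) (initWord x n) (a (x n)) := by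
  simp only [← toEuclideanCLM_wordProd]
  rfl

lemma det_toEuclideanCLM (M : Matrix (Fin d) (Fin d) ℝ) :
    (Matrix.toEuclideanCLM (𝕜 := ℝ) M).det = M.det :=
  LinearMap.det_toLin (EuclideanSpace.basisFun (Fin d) ℝ).toBasis M

lemma leastSingularValue_toEuclideanCLM (M : Matrix (Fin d) (Fin d) ℝ) :
    leastSingularValue (Matrix.toEuclideanCLM (𝕜 := ℝ) M) = alphaMin M := by
  rw [alphaMin, opNorm, Matrix.nonsing_inv_eq_ringInverse, leastSingularValue, map_ringInverse]

lemma tParam_eq_criticalExponent :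
    tParam T = criticalExponent fun i ↦ Matrix.toEuclideanCLM (𝕜 := ℝ) (T i) := by
  simp only [tParam, criticalExponent, ← toEuclideanCLM_wordProd, det_toEuclideanCLM,
    leastSingularValue_toEuclideanCLM]

end Matrices

/-- **Theorem 1.1.** If `‖T_i‖ < 1/2` for all `i` and `t(T_1,…,T_m) > d`, then for
Lebesgue-a.e. `a ∈ ℝ^{md}` the self-affine set `K^a` has non-empty interior. -/
theorem typical_selfAffine_nonempty_interior_of_tParam_gt
    (T : Fin m → Matrix (Fin d) (Fin d) ℝ)
    (hinv : ∀ i, IsUnit (T i).det)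
    (hnorm : ∀ i, opNorm (T i) < 1 / 2)
    (ht : (d : ℝ) < tParam T) :
    ∀ᵐ a ∂(volume : Measure (Fin m → EuclideanSpace ℝ (Fin d))),
      (interior (attractor T a)).Nonempty := by
  simp only [attractor_eq_range]
  refine typical_selfAffine_nonempty_interior_of_tParam_gt_general hnorm ?_
  rwa [finrank_euclideanSpace_fin, ← tParam_eq_criticalExponent]

end SelfAffine
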